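/- For every weak alternating automaton 𝒜 over an alphabet A with state set Q there exist a backward deterministic automaton ℬ over A and an output function λ from the states of ℬ to subsets of Q such that f_𝒜 = f_{ℬ,λ}. Moreover: (1) if S₀, …, S_{k−1} are the strongly connected components of the transition graph of 𝒜 and m_i = |S_i|, then ℬ has at most ∏_{i<k} (m_i + 1)^{m_i} states; in particular ℬ has at most (n+1)^n states where n = |Q|; and (2) the recurrence condition of ℬ is a generalized transition Büchi condition with at most n transition sets. -/

import Mathlib

/-- Transition conditions over state set `Q` and alphabet `A`: built from atoms `B ⊆ A`
and `○q` for `q ∈ Q` using disjunction and conjunction. -/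
inductive TCond (Q : Type*) (A : Type*) : Type _ where
  | atom : Set A → TCond Q A
  | next : Q → TCond Q A
  | or   : TCond Q A → TCond Q A → TCond Q A
  | and  : TCond Q A → TCond Q A → TCond Q A

namespace TCond

/-- `○q` occurs in the transition condition. -/
def NextOccurs {Q A : Type*} : TCond Q A → Q → Prop
  | atom _, _ => False
  | next q', q => q' = q
  | or τ₀ τ₁, q => τ₀.NextOccurs q ∨ τ₁.NextOccurs q
  | and τ₀ τ₁, q => τ₀.NextOccurs q ∨ τ₁.NextOccurs q

/-- The subformula relation on transition conditions. -/
inductive Subf {Q A : Type*} : TCond Q A → TCond Q A → Prop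
  | refl (τ : TCond Q A) : Subf τ τ
  | orL {χ τ₀ τ₁} : Subf χ τ₀ → Subf χ (or τ₀ τ₁)
  | orR {χ τ₀ τ₁} : Subf χ τ₁ → Subf χ (or τ₀ τ₁)
  | andL {χ τ₀ τ₁} : Subf χ τ₀ → Subf χ (and τ₀ τ₁)
  | andR {χ τ₀ τ₁} : Subf χ τ₁ → Subf χ (and τ₀ τ₁)

end TCond

/-- A weak alternating automaton over the alphabet `A` with state set `Q`:
a transition function `δ` and a partition of the states into recurring states
(the set `recurring`) and non-recurring states (its complement), such that any two states
in the same strongly connected component of the transition graph are both recurring or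
both non-recurring. -/
structure WAA (Q : Type*) (A : Type*) where
  δ : Q → TCond Q A
  recurring : Set Q
  weak : ∀ q q',
    Relation.ReflTransGen (fun x y => (δ x).NextOccurs y) q q' →
    Relation.ReflTransGen (fun x y => (δ x).NextOccurs y) q' q →
    (q ∈ recurring ↔ q' ∈ recurring)

namespace WAA

variable {Q A : Type*}

/-- The edge relation of the transition graph of a weak alternating automaton. -/
def Edge (M : WAA Q A) (q q' : Q) : Prop := (M.δ q).NextOccurs q'

/-- `q` and `q'` lie in the same strongly connected component of the transition graph. -/
def Conn (M : WAA Q A) (q q' : Q) : Prop :=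
  Relation.ReflTransGen M.Edge q q' ∧ Relation.ReflTransGen M.Edge q' q

/-- Vertices of run graphs: pairs of a position and either a state or a transition
condition. -/
abbrev Vert (Q A : Type*) := ℕ × (Q ⊕ TCond Q A)

/-- A run graph of a weak alternating automaton on an ω-word `u`. -/
structure RunGraph (M : WAA Q A) (u : ℕ → A) where
  V : Set (Vert Q A)
  E : Vert Q A → Vert Q A → Prop
  edge_mem : ∀ ⦃v w⦄, E v w → v ∈ V ∧ w ∈ V
  /-- every transition-condition vertex carries a subformula of some `δ q` -/
  cond_subf : ∀ i τ, (i, Sum.inr τ) ∈ V → ∃ q, TCond.Subf τ (M.δ q)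
  /-- a state vertex has exactly one outgoing edge, to `⟨i, δ q⟩` -/
  state_succ : ∀ i q, (i, Sum.inl q) ∈ V →
    ∀ w, E (i, Sum.inl q) w ↔ w = (i, Sum.inr (M.δ q))
  /-- a `○q` vertex has exactly one outgoing edge, to `⟨i+1, q⟩` -/
  next_succ : ∀ i q, (i, Sum.inr (TCond.next q)) ∈ V →
    ∀ w, E (i, Sum.inr (TCond.next q)) w ↔ w = (i + 1, Sum.inl q)
  /-- a disjunction vertex has outgoing edges only to the disjuncts, and at least one -/
  or_succ_subset : ∀ i τ₀ τ₁, (i, Sum.inr (TCond.or τ₀ τ₁)) ∈ V →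
    ∀ w, E (i, Sum.inr (TCond.or τ₀ τ₁)) w → w = (i, Sum.inr τ₀) ∨ w = (i, Sum.inr τ₁)
  or_succ_exists : ∀ i τ₀ τ₁, (i, Sum.inr (TCond.or τ₀ τ₁)) ∈ V →
    ∃ w, E (i, Sum.inr (TCond.or τ₀ τ₁)) w
  /-- a conjunction vertex has outgoing edges exactly to the two conjuncts -/
  and_succ : ∀ i τ₀ τ₁, (i, Sum.inr (TCond.and τ₀ τ₁)) ∈ V →
    ∀ w, E (i, Sum.inr (TCond.and τ₀ τ₁)) w ↔ (w = (i, Sum.inr τ₀) ∨ w = (i, Sum.inr τ₁))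
  /-- atom vertices have no outgoing edges -/
  atom_succ : ∀ i B w, ¬ E (i, Sum.inr (TCond.atom B)) w
  /-- there is no vertex `⟨i, B⟩` with `u i ∉ B` -/
  atom_ok : ∀ i B, (i, Sum.inr (TCond.atom B)) ∈ V → u i ∈ B

/-- A run graph is final if on every infinite path, every state occurring infinitely
often (as the second component of vertices of the path) is recurring. -/
def RunGraph.Final {M : WAA Q A} {u : ℕ → A} (G : RunGraph M u) : Prop :=
  ∀ p : ℕ → Vert Q A, (∀ n, G.E (p n) (p (n + 1))) →
    ∀ q : Q, (∀ m, ∃ n, m ≤ n ∧ (p n).2 = Sum.inl q) → q ∈ M.recurring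

/-- The suffix `u[i,ω)` is accepted from state `q` if some final run graph on `u`
contains the vertex `⟨i, q⟩`. -/
def AcceptsFrom (M : WAA Q A) (u : ℕ → A) (i : ℕ) (q : Q) : Prop :=
  ∃ G : RunGraph M u, G.Final ∧ (i, Sum.inl q) ∈ G.V

end WAA

/-- A (backward) run of a backward deterministic automaton with transition function `ρ`
on the ω-word `u`: `r i = ρ (u i) (r (i+1))` for all `i`. -/
def IsBackRun {P A : Type*} (ρ : A → P → P) (u : ℕ → A) (r : ℕ → P) : Prop :=
  ∀ i, r i = ρ (u i) (r (i + 1))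

/-- A run is final for the generalized transition Büchi condition `T` if for every `j`
the run uses a transition from `T j` infinitely often. -/
def GTBFinal {P A : Type*} {k : ℕ} (T : Fin k → Set (P × A × P)) (u : ℕ → A)
    (r : ℕ → P) : Prop :=
  ∀ j : Fin k, ∀ m : ℕ, ∃ i, m ≤ i ∧ (r i, u i, r (i + 1)) ∈ T j

/-- `S` is an enumeration of all strongly connected components of the transition graph
of `M`: the `S j` partition the state set and each `S j` is exactly one
SCC (the equivalence class of any of its elements under mutual reachability). -/
def IsSCCEnum {Q A : Type*} (M : WAA Q A) {l : ℕ} (S : Fin l → Finset Q) : Prop :=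
  (∀ q : Q, ∃! j : Fin l, q ∈ S j) ∧
  (∀ (j : Fin l) (q q' : Q), q ∈ S j → (q' ∈ S j ↔ M.Conn q q'))

/-!
Inside a non-recurring component of the transition graph the accepted states, and inside a
recurring one the rejected states, form the least solution of a backward recursion
`X i = F i (X (i + 1))` with monotone `F i`, once acceptance in the components below is known. The
approximations of the least solution from below form, at each position, a finite chain of subsets of
the component, and each `F i` maps the chain at `i + 1` to the chain at `i`. A chain of subsets of
an `m`-element set is coded by the function counting the members that contain a point, which takes
values in `{0, …, m}`; one such code per component is a state of the automaton.

A sequence of codes that obeys the recursion is the right one as soon as infinitely often `F i`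
identifies the two largest members of the chain: each such position lets the largest member be
bounded by the pull-back of a member one smaller, hence eventually by a pull-back of `∅`, so it is
an approximation from below. Conversely, if from some position on the two largest members were never
identified, the second largest ones would contain every approximation.
-/

/-! ### Chains of sets and their codes -/

namespace ChainCode

open Filter

variable {α : Type*}

/-- The superlevel sets of `g`; they form the chain of sets that `g` encodes. -/
def level (g : α → ℕ) (k : ℕ) : Set α := {x | k < g x}

/-- The code of a family of sets: the function counting the members of `D` that contain a point.
A finite chain is recovered, up to the empty set, as the levels of its code. -/
noncomputable def code (D : Set (Set α)) (x : α) : ℕ := {Y ∈ D | x ∈ Y}.ncard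

/-- Applying the monotone map `F` to every member of the chain encoded by `g`. -/
noncomputable def step (F : Set α →o Set α) (g : α → ℕ) : α → ℕ :=
  code (F '' Set.range (level g))

/-- `F` identifies the two largest members of the chain encoded by `g`; transitions with this
property make up the Büchi condition. -/
def Collapses (F : Set α →o Set α) (g : α → ℕ) : Prop := F (level g 0) = F (level g 1)

/-- The operator on sequences whose least fixed point is sought; its `n`-fold iterate sends `X` to
`i ↦ F i (F (i + 1) (⋯ F (i + n - 1) (X (i + n))))`. -/
def pull {β : Type*} [Preorder β] (F : ℕ → β →o β) : (ℕ → β) →o (ℕ → β) where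
  toFun X i := F i (X (i + 1))
  monotone' _ _ hXY i := (F i).monotone (hXY (i + 1))

/-- The `n`-th approximation from below of the least fixed point of `pull F`. -/
def stage (F : ℕ → Set α →o Set α) (n : ℕ) : ℕ → Set α := (pull F)^[n] ⊥

/-- The union of all stages, which for finite `α` is the least fixed point of `pull F`. -/
def limit (F : ℕ → Set α →o Set α) (i : ℕ) : Set α := ⋃ n, stage F n i

/-- The code of the chain of stages at position `i`. -/
noncomputable def limitCode (F : ℕ → Set α →o Set α) (i : ℕ) : α → ℕ :=
  code (Set.range fun n => stage F n i)

theorem antitone_level (g : α → ℕ) : Antitone (level g) :=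
  fun _ _ hkl _ hx => hkl.trans_lt hx

theorem isChain_image_range_level (F : Set α →o Set α) (g : α → ℕ) :
    IsChain (· ⊆ ·) (F '' Set.range (level g)) :=
  F.monotone.isChain_image (antitone_level g).isChain_range

theorem code_insert_empty (D : Set (Set α)) : code (insert ∅ D) = code D := by
  funext x
  refine congrArg Set.ncard (Set.ext fun Y => ?_)
  constructor
  · rintro ⟨rfl | hY, hx⟩
    · exact absurd hx (Set.notMem_empty x)
    · exact ⟨hY, hx⟩
  · rintro ⟨hY, hx⟩
    exact ⟨Or.inr hY, hx⟩

section Pull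

variable {β : Type*} [Preorder β] {F : ℕ → β →o β}

theorem iterate_pull_apply_mono {X Y : ℕ → β} {n i : ℕ} (h : X (i + n) ≤ Y (i + n)) :
    (pull F)^[n] X i ≤ (pull F)^[n] Y i := by
  induction n generalizing i with
  | zero => exact h
  | succ n ih =>
    simp only [Function.iterate_succ_apply']
    refine (F i).monotone (ih ?_)
    rwa [show i + 1 + n = i + (n + 1) by omega]

end Pull

section Stage

variable {F : ℕ → Set α →o Set α}

theorem stage_succ (n i : ℕ) : stage F (n + 1) i = F i (stage F n (i + 1)) :=
  congrFun (Function.iterate_succ_apply' (pull F) n ⊥) i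

theorem monotone_stage : Monotone (stage F) :=
  (pull F).monotone.monotone_iterate_of_le_map bot_le

theorem isChain_range_stage (i : ℕ) : IsChain (· ⊆ ·) (Set.range fun n => stage F n i) :=
  Monotone.isChain_range fun _ _ hmn => monotone_stage hmn i

theorem range_stage_eq_insert (i : ℕ) :
    Set.range (fun n => stage F n i) =
      insert ∅ (F i '' Set.range fun n => stage F n (i + 1)) := by
  ext Y
  constructor
  · rintro ⟨_ | n, rfl⟩
    · exact Or.inl rfl
    · exact Or.inr ⟨_, ⟨n, rfl⟩, (stage_succ n i).symm⟩
  · rintro (rfl | ⟨_, ⟨n, rfl⟩, rfl⟩)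
    · exact ⟨0, rfl⟩
    · exact ⟨n + 1, stage_succ n i⟩

variable [Finite α]

theorem exists_stage_eq_limit (i : ℕ) : ∃ n, stage F n i = limit F i := by
  obtain ⟨n, hn⟩ := WellFoundedGT.monotone_chain_condition
    (a := ⟨fun n => stage F n i, fun _ _ h => monotone_stage h i⟩)
  refine ⟨n, subset_antisymm (Set.subset_iUnion (fun n => stage F n i) n)
    (Set.iUnion_subset fun m => ?_)⟩
  rcases le_total n m with h | h
  · exact (hn m h).ge
  · exact monotone_stage h i

theorem apply_limit_succ (i : ℕ) : F i (limit F (i + 1)) = limit F i := by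
  apply subset_antisymm
  · obtain ⟨n, hn⟩ := exists_stage_eq_limit (F := F) (i + 1)
    rw [← hn, ← stage_succ]
    exact Set.subset_iUnion (fun n => stage F n i) (n + 1)
  · refine Set.iUnion_subset fun n => (monotone_stage n.le_succ i).trans ?_
    rw [stage_succ]
    exact (F i).monotone (Set.subset_iUnion (fun n => stage F n (i + 1)) n)

end Stage

section Code

variable [Finite α] {D : Set (Set α)}

theorem code_le_code_iff (hD : IsChain (· ⊆ ·) D) {x y : α} :
    code D x ≤ code D y ↔ ∀ Y ∈ D, x ∈ Y → y ∈ Y := by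
  constructor
  · intro hxy Y hY hxY
    by_contra hyY
    refine hxy.not_gt (Set.ncard_lt_ncard ⟨?_, fun h => hyY (h ⟨hY, hxY⟩).2⟩)
    rintro Z ⟨hZ, hyZ⟩
    exact ⟨hZ, (hD.total hY hZ).elim (fun h => h hxY) fun h => absurd (h hyZ) hyY⟩
  · exact fun h => Set.ncard_le_ncard fun Y ⟨hY, hxY⟩ => ⟨hY, h Y hY hxY⟩

theorem code_pos_iff {x : α} : 0 < code D x ↔ ∃ Y ∈ D, x ∈ Y :=
  Set.ncard_pos

theorem code_le_card (hD : IsChain (· ⊆ ·) D) (x : α) : code D x ≤ Nat.card α := by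
  have maps : ∀ Y ∈ {Y ∈ D | x ∈ Y}, Y.ncard ∈ Set.Icc 1 (Nat.card α) := fun Y ⟨_, hxY⟩ =>
    ⟨(Set.ncard_pos).2 ⟨x, hxY⟩, Set.ncard_le_card Y⟩
  have inj : Set.InjOn Set.ncard {Y ∈ D | x ∈ Y} := by
    rintro Y ⟨hY, -⟩ Z ⟨hZ, -⟩ hYZ
    rcases hD.total hY hZ with h | h
    · exact Set.eq_of_subset_of_ncard_le h hYZ.ge
    · exact (Set.eq_of_subset_of_ncard_le h hYZ.le).symm
  calc code D x ≤ (Set.Icc 1 (Nat.card α)).ncard := Set.ncard_le_ncard_of_injOn Set.ncard maps inj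
    _ = Nat.card α := by simp [Set.ncard_eq_toFinset_card']

theorem exists_level_eq_empty (g : α → ℕ) : ∃ k, level g k = ∅ := by
  obtain ⟨k, hk⟩ := (Set.finite_range g).bddAbove
  exact ⟨k, Set.eq_empty_of_forall_notMem fun x hx => (hk ⟨x, rfl⟩).not_gt hx⟩

theorem level_code_mem (hD : IsChain (· ⊆ ·) D) (k : ℕ) :
    level (code D) k ∈ insert ∅ D := by
  rcases (level (code D) k).eq_empty_or_nonempty with hempty | hne
  · exact Or.inl hempty
  obtain ⟨x, hkx, hmin⟩ := Set.exists_min_image _ (code D) (Set.toFinite _) hne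
  obtain ⟨Y, ⟨hY, hxY⟩, hYmin⟩ := (Set.toFinite {Y ∈ D | x ∈ Y}).exists_minimal
    (code_pos_iff.1 (pos_of_gt hkx))
  have hYleast : ∀ Z ∈ D, x ∈ Z → Y ⊆ Z := fun Z hZ hxZ =>
    (hD.total hY hZ).elim id (hYmin ⟨hZ, hxZ⟩)
  suffices level (code D) k = Y from Or.inr (this ▸ hY)
  ext y
  constructor
  · exact fun hky => (code_le_code_iff hD).1 (hmin y hky) Y hY hxY
  · exact fun hyY => lt_of_lt_of_le (b := code D x) hkx
      ((code_le_code_iff hD).2 fun Z hZ hxZ => hYleast Z hZ hxZ hyY)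

theorem exists_level_code_eq (hD : IsChain (· ⊆ ·) D) {Y : Set α} (hY : Y ∈ D) :
    ∃ k, level (code D) k = Y := by
  rcases Y.eq_empty_or_nonempty with rfl | hne
  · exact exists_level_eq_empty _
  obtain ⟨x, hxY, hmin⟩ := Set.exists_min_image _ (code D) (Set.toFinite _) hne
  have hpos : 0 < code D x := code_pos_iff.2 ⟨Y, hY, hxY⟩
  refine ⟨code D x - 1, Set.ext fun y => ⟨fun hy => ?_, fun hy => ?_⟩⟩
  · exact (code_le_code_iff hD).1 (Nat.le_of_pred_lt hy) Y hY hxY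
  · exact (Nat.sub_one_lt hpos.ne').trans_le (hmin y hy)

theorem range_level_code (hD : IsChain (· ⊆ ·) D) :
    Set.range (level (code D)) = insert ∅ D := by
  apply subset_antisymm
  · rintro _ ⟨k, rfl⟩
    exact level_code_mem hD k
  · rintro Y (rfl | hY)
    · exact exists_level_eq_empty _
    · exact exists_level_code_eq hD hY

end Code

section Step

variable {F : Set α →o Set α} {g : α → ℕ}

theorem step_apply_le_of_subset_image {x : α} {k : ℕ} {G : ℕ → Set α}
    (h : {Y ∈ F '' Set.range (level g) | x ∈ Y} ⊆ G '' Set.Iio k) : step F g x ≤ k :=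
  calc step F g x ≤ (G '' Set.Iio k).ncard := Set.ncard_le_ncard h
    _ ≤ (Set.Iio k).ncard := Set.ncard_image_le (Set.finite_Iio k)
    _ = k := by simp [Set.ncard_eq_toFinset_card']

theorem level_step_subset (k : ℕ) : level (step F g) k ⊆ F (level g k) := by
  intro x hx
  by_contra hxF
  refine (step_apply_le_of_subset_image (G := fun l => F (level g l)) ?_).not_gt hx
  rintro _ ⟨⟨_, ⟨l, rfl⟩, rfl⟩, hxl⟩
  exact ⟨l, lt_of_not_ge fun hkl => hxF (F.monotone (antitone_level g hkl) hxl), rfl⟩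

theorem Collapses.level_step_subset_succ (hc : Collapses F g) (k : ℕ) :
    level (step F g) k ⊆ F (level g (k + 1)) := by
  intro x hx
  by_contra hxF
  have lt_of_mem : ∀ l, x ∈ F (level g (l + 1)) → l < k := fun l hxl =>
    lt_of_not_ge fun hkl => hxF (F.monotone (antitone_level g (Nat.succ_le_succ hkl)) hxl)
  refine (step_apply_le_of_subset_image (G := fun l => F (level g (l + 1))) ?_).not_gt hx
  rintro _ ⟨⟨_, ⟨_ | l, rfl⟩, rfl⟩, hxl⟩
  · exact ⟨0, lt_of_mem 0 (hc.subset hxl), hc.symm⟩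
  · exact ⟨l, lt_of_mem l hxl, rfl⟩

variable [Finite α]

theorem step_le_card (F : Set α →o Set α) (g : α → ℕ) (x : α) : step F g x ≤ Nat.card α :=
  code_le_card (isChain_image_range_level F g) x

theorem range_level_step (F : Set α →o Set α) (g : α → ℕ) :
    Set.range (level (step F g)) = insert ∅ (F '' Set.range (level g)) :=
  range_level_code (isChain_image_range_level F g)

theorem apply_level_one_subset (hc : ¬ Collapses F g) :
    F (level g 1) ⊆ level (step F g) 1 := by
  intro x hx
  exact (Set.one_lt_ncard (Set.toFinite _)).2 ⟨_, ⟨⟨_, ⟨0, rfl⟩, rfl⟩,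
    F.monotone (antitone_level g zero_le_one) hx⟩, _, ⟨⟨_, ⟨1, rfl⟩, rfl⟩, hx⟩, hc⟩

end Step

section LimitCode

variable {F : ℕ → Set α →o Set α} {g : ℕ → α → ℕ}

/-- Every collapse on the way lets one more level be pulled back onto the largest one. -/
theorem exists_level_zero_subset_iterate (hg : ∀ i, g i = step (F i) (g (i + 1)))
    (hc : ∃ᶠ i in atTop, Collapses (F i) (g (i + 1))) (k i : ℕ) :
    ∃ n, level (g i) 0 ⊆ (pull F)^[n] (fun j => level (g j) k) i := by
  induction k with
  | zero => exact ⟨0, subset_rfl⟩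
  | succ k ih =>
    obtain ⟨n, hn⟩ := ih
    obtain ⟨j, hj, hcj⟩ := frequently_atTop.1 hc (i + n)
    obtain ⟨l, rfl⟩ := Nat.exists_eq_add_of_le ((i.le_add_right n).trans hj)
    have level_le_pull : (fun j => level (g j) k) ≤ pull F fun j => level (g j) k := fun j =>
      (congrArg (level · k) (hg j)).subset.trans (level_step_subset k)
    refine ⟨l + 1, hn.trans ?_⟩
    rw [Function.iterate_succ_apply]
    refine ((pull F).monotone.monotone_iterate_of_le_map level_le_pull
      (by omega : n ≤ l) i).trans (iterate_pull_apply_mono ?_)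
    exact (congrArg (level · k) (hg (i + l))).subset.trans (hcj.level_step_subset_succ k)

variable [Finite α]

theorem range_level_limitCode (F : ℕ → Set α →o Set α) (i : ℕ) :
    Set.range (level (limitCode F i)) = Set.range fun n => stage F n i := by
  rw [limitCode, range_level_code (isChain_range_stage i)]
  exact Set.insert_eq_of_mem ⟨0, rfl⟩

theorem limitCode_eq_step (F : ℕ → Set α →o Set α) (i : ℕ) :
    limitCode F i = step (F i) (limitCode F (i + 1)) := by
  rw [step, range_level_limitCode, limitCode, range_stage_eq_insert, code_insert_empty]

theorem limitCode_pos_iff {i : ℕ} {x : α} : 0 < limitCode F i x ↔ x ∈ limit F i := by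
  simp only [limitCode, code_pos_iff, Set.exists_range_iff, limit, Set.mem_iUnion]

/-- If no position from `m` on collapsed, the second largest stage would be a pre-fixed point
from `m` on, and hence would contain the limit. -/
theorem frequently_collapses_limitCode (F : ℕ → Set α →o Set α) :
    ∃ᶠ i in atTop, Collapses (F i) (limitCode F (i + 1)) := by
  refine frequently_atTop.2 fun m => ?_
  by_contra! hno
  have stage_subset : ∀ n, ∀ i ≥ m, stage F n i ⊆ level (limitCode F i) 1 := by
    intro n
    induction n with
    | zero => exact fun i _ => Set.empty_subset _
    | succ n ih =>
      intro i hi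
      rw [stage_succ, limitCode_eq_step]
      exact ((F i).monotone (ih (i + 1) (by omega))).trans (apply_level_one_subset (hno i hi))
  refine hno m le_rfl (congrArg (F m) ?_)
  refine subset_antisymm (fun x hx => ?_) (antitone_level _ zero_le_one)
  obtain ⟨n, hn⟩ := Set.mem_iUnion.1 (limitCode_pos_iff.1 hx)
  exact stage_subset n (m + 1) (by omega) hn

theorem stage_mem_range_level (hg : ∀ i, g i = step (F i) (g (i + 1))) (n i : ℕ) :
    stage F n i ∈ Set.range (level (g i)) := by
  induction n generalizing i with
  | zero => exact exists_level_eq_empty (g i)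
  | succ n ih =>
    rw [hg i, range_level_step, stage_succ]
    exact Or.inr ⟨_, ih (i + 1), rfl⟩

theorem exists_stage_eq_level_zero (hg : ∀ i, g i = step (F i) (g (i + 1)))
    (hc : ∃ᶠ i in atTop, Collapses (F i) (g (i + 1))) (i : ℕ) :
    ∃ n, stage F n i = level (g i) 0 := by
  obtain ⟨n, hn⟩ := exists_level_zero_subset_iterate hg hc (Nat.card α) i
  have level_card_eq_empty : (fun j => level (g j) (Nat.card α)) = ⊥ := by
    refine funext fun j => Set.eq_empty_of_forall_notMem
      fun x (hx : Nat.card α < g j x) => hx.not_ge ?_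
    rw [hg j]
    exact step_le_card _ _ x
  rw [level_card_eq_empty] at hn
  obtain ⟨k, hk⟩ := stage_mem_range_level hg n i
  exact ⟨n, subset_antisymm (hk ▸ antitone_level _ k.zero_le) hn⟩

theorem mem_range_stage_or_stage_subset (hg : ∀ i, g i = step (F i) (g (i + 1))) (n i : ℕ)
    {Y : Set α} (hY : Y ∈ Set.range (level (g i))) :
    Y ∈ Set.range (fun m => stage F m i) ∨ stage F n i ⊆ Y := by
  induction n generalizing i Y with
  | zero => exact Or.inr (Set.empty_subset Y)
  | succ n ih =>
    rw [hg i, range_level_step] at hY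
    rw [range_stage_eq_insert, stage_succ]
    rcases hY with rfl | ⟨Z, hZ, rfl⟩
    · exact Or.inl (Or.inl rfl)
    · exact (ih (i + 1) hZ).imp (fun h => Or.inr ⟨Z, h, rfl⟩) fun h => (F i).monotone h

theorem eq_limitCode (hg : ∀ i, g i = step (F i) (g (i + 1)))
    (hc : ∃ᶠ i in atTop, Collapses (F i) (g (i + 1))) : g = limitCode F := by
  have range_eq : ∀ i, Set.range (level (g i)) = Set.range fun n => stage F n i := by
    refine fun i => subset_antisymm (fun Y hY => ?_) ?_
    · obtain ⟨n, hn⟩ := exists_stage_eq_level_zero hg hc i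
      rcases mem_range_stage_or_stage_subset hg n i hY with h | h
      · exact h
      · obtain ⟨k, rfl⟩ := hY
        exact ⟨n, h.antisymm (hn ▸ antitone_level _ k.zero_le)⟩
    · rintro _ ⟨n, rfl⟩
      exact stage_mem_range_level hg n i
  funext i
  rw [hg i, limitCode_eq_step, step, step, range_eq, range_level_limitCode]

end LimitCode

end ChainCode

/-! ### Run graphs and rankings -/

namespace TCond

variable {Q A : Type*}

/-- Truth of a transition condition when the current letter is `a` and `○q` holds exactly for
`q ∈ X`. -/
def Sat : TCond Q A → A → Set Q → Prop
  | atom B, a, _ => a ∈ B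
  | next q, _, X => q ∈ X
  | or τ₀ τ₁, a, X => τ₀.Sat a X ∨ τ₁.Sat a X
  | and τ₀ τ₁, a, X => τ₀.Sat a X ∧ τ₁.Sat a X

theorem Sat.imp {τ : TCond Q A} {a : A} {X Y : Set Q}
    (hXY : ∀ q, τ.NextOccurs q → q ∈ X → q ∈ Y) (hX : τ.Sat a X) : τ.Sat a Y := by
  induction τ with
  | atom B => exact hX
  | next q => exact hXY q rfl hX
  | or τ₀ τ₁ ih₀ ih₁ =>
    exact Or.imp (ih₀ fun q hq => hXY q (Or.inl hq)) (ih₁ fun q hq => hXY q (Or.inr hq)) hX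
  | and τ₀ τ₁ ih₀ ih₁ =>
    exact And.imp (ih₀ fun q hq => hXY q (Or.inl hq)) (ih₁ fun q hq => hXY q (Or.inr hq)) hX

theorem sat_congr {τ : TCond Q A} {a : A} {X Y : Set Q}
    (hXY : ∀ q, τ.NextOccurs q → (q ∈ X ↔ q ∈ Y)) : τ.Sat a X ↔ τ.Sat a Y :=
  ⟨Sat.imp fun q hq => (hXY q hq).1, Sat.imp fun q hq => (hXY q hq).2⟩

theorem Subf.trans {τ₀ τ₁ τ₂ : TCond Q A} (h₀₁ : Subf τ₀ τ₁) (h₁₂ : Subf τ₁ τ₂) :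
    Subf τ₀ τ₂ := by
  induction h₁₂ with
  | refl => exact h₀₁
  | orL _ ih => exact .orL ih
  | orR _ ih => exact .orR ih
  | andL _ ih => exact .andL ih
  | andR _ ih => exact .andR ih

section EvalRank

variable {O : Type*} [LinearOrder O] [BoundedOrder O]

open Classical in
/-- The least bound on the ranks of the states that some way of satisfying the condition relies
on; it is `⊤` for a false condition. -/
noncomputable def evalRank (rk : Q → O) (a : A) : TCond Q A → O
  | atom B => if a ∈ B then ⊥ else ⊤
  | next q => rk q
  | or τ₀ τ₁ => min (τ₀.evalRank rk a) (τ₁.evalRank rk a)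
  | and τ₀ τ₁ => max (τ₀.evalRank rk a) (τ₁.evalRank rk a)

theorem Sat.evalRank_le {rk : Q → O} {a : A} {o : O} {τ : TCond Q A}
    (h : τ.Sat a {q | rk q ≤ o}) : τ.evalRank rk a ≤ o := by
  induction τ with
  | atom B => exact (if_pos (show a ∈ B from h)).trans_le bot_le
  | next q => exact h
  | or τ₀ τ₁ ih₀ ih₁ => exact min_le_iff.2 (Or.imp ih₀ ih₁ h)
  | and τ₀ τ₁ ih₀ ih₁ => exact max_le (ih₀ h.1) (ih₁ h.2)

theorem Sat.evalRank_lt {rk : Q → O} {a : A} {o : O} (ho : ⊥ < o) {τ : TCond Q A}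
    (h : τ.Sat a {q | rk q < o}) : τ.evalRank rk a < o := by
  induction τ with
  | atom B => exact (if_pos (show a ∈ B from h)).trans_lt ho
  | next q => exact h
  | or τ₀ τ₁ ih₀ ih₁ => exact min_lt_iff.2 (Or.imp ih₀ ih₁ h)
  | and τ₀ τ₁ ih₀ ih₁ => exact max_lt (ih₀ h.1) (ih₁ h.2)

end EvalRank

end TCond

namespace WAA

open Filter

variable {Q A : Type*} {M : WAA Q A} {u : ℕ → A}

/-- The edges that can occur in a run graph of `M`. -/
def Arc (M : WAA Q A) : Vert Q A → Vert Q A → Prop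
  | (i, Sum.inl q), w => w = (i, Sum.inr (M.δ q))
  | (i, Sum.inr (.next q)), w => w = (i + 1, Sum.inl q)
  | (i, Sum.inr (.or τ₀ τ₁)), w => w = (i, Sum.inr τ₀) ∨ w = (i, Sum.inr τ₁)
  | (i, Sum.inr (.and τ₀ τ₁)), w => w = (i, Sum.inr τ₀) ∨ w = (i, Sum.inr τ₁)
  | (_, Sum.inr (.atom _)), _ => False

theorem RunGraph.arc_of_edge (G : M.RunGraph u) {v w : Vert Q A} (h : G.E v w) : M.Arc v w := by
  have hv := (G.edge_mem h).1
  match v, h, hv with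
  | (i, Sum.inl q), h, hv => exact (G.state_succ i q hv w).1 h
  | (i, Sum.inr (.next q)), h, hv => exact (G.next_succ i q hv w).1 h
  | (i, Sum.inr (.or τ₀ τ₁)), h, hv => exact G.or_succ_subset i τ₀ τ₁ hv w h
  | (i, Sum.inr (.and τ₀ τ₁)), h, hv => exact (G.and_succ i τ₀ τ₁ hv w).1 h
  | (i, Sum.inr (.atom B)), h, _ => exact G.atom_succ i B w h

theorem Arc.eq_inl_or_sizeOf_lt {i : ℕ} {τ : TCond Q A} {w : Vert Q A}
    (h : M.Arc (i, Sum.inr τ) w) :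
    (∃ q, w.2 = Sum.inl q) ∨ ∃ τ', w.2 = Sum.inr τ' ∧ sizeOf τ' < sizeOf τ := by
  match τ, h with
  | .next q, h => exact Or.inl ⟨q, congrArg Prod.snd h⟩
  | .or τ₀ τ₁, h | .and τ₀ τ₁, h =>
    rcases h with rfl | rfl <;> exact Or.inr ⟨_, rfl, by simp +arith⟩

/-- Conditions shrink along the arcs between condition vertices. -/
theorem exists_state_of_arcs {p : ℕ → Vert Q A} (hp : ∀ n, M.Arc (p n) (p (n + 1))) (m : ℕ) :
    ∃ n ≥ m, ∃ q, (p n).2 = Sum.inl q := by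
  rcases hm : (p m).2 with q | τ
  · exact ⟨m, le_rfl, q, hm⟩
  induction hs : sizeOf τ using Nat.strong_induction_on generalizing m τ with
  | h s ih =>
    have harc : M.Arc ((p m).1, Sum.inr τ) (p (m + 1)) := hm ▸ hp m
    rcases harc.eq_inl_or_sizeOf_lt with ⟨q, hq⟩ | ⟨τ', hτ', hlt⟩
    · exact ⟨m + 1, by omega, q, hq⟩
    · obtain ⟨n, hn, hex⟩ := ih _ (hs ▸ hlt) (m + 1) τ' hτ' rfl
      exact ⟨n, by omega, hex⟩

theorem exists_frequently_state_of_arcs [Finite Q] {p : ℕ → Vert Q A}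
    (hp : ∀ n, M.Arc (p n) (p (n + 1))) : ∃ q, ∃ᶠ n in atTop, (p n).2 = Sum.inl q := by
  rw [← frequently_exists]
  exact frequently_atTop.2 (exists_state_of_arcs hp)

theorem RunGraph.Final.wellFounded [Finite Q] {G : M.RunGraph u} (hG : G.Final) :
    WellFounded fun w v => G.E v w ∧ ∀ q, w.2 = Sum.inl q → q ∉ M.recurring := by
  refine wellFounded_iff_isEmpty_descending_chain.2 ⟨fun ⟨p, hp⟩ => ?_⟩
  obtain ⟨q, hq⟩ := exists_frequently_state_of_arcs fun n => G.arc_of_edge (hp n).1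
  obtain ⟨n, hn, hqn⟩ := frequently_atTop.1 hq 1
  obtain ⟨n, rfl⟩ := Nat.exists_eq_add_of_le' hn
  exact (hp n).2 q hqn (hG p (fun n => (hp n).1) q (frequently_atTop.1 hq))

theorem RunGraph.sat_of_mem (G : M.RunGraph u) {i : ℕ} {τ : TCond Q A}
    (h : (i, Sum.inr τ) ∈ G.V) : τ.Sat (u i) {q | (i + 1, Sum.inl q) ∈ G.V} := by
  induction τ with
  | atom B => exact G.atom_ok i B h
  | next q => exact (G.edge_mem ((G.next_succ i q h _).2 rfl)).2
  | or τ₀ τ₁ ih₀ ih₁ =>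
    obtain ⟨w, hw⟩ := G.or_succ_exists i τ₀ τ₁ h
    have hwV := (G.edge_mem hw).2
    rcases G.or_succ_subset i τ₀ τ₁ h w hw with rfl | rfl
    · exact Or.inl (ih₀ hwV)
    · exact Or.inr (ih₁ hwV)
  | and τ₀ τ₁ ih₀ ih₁ =>
    have hedge := G.and_succ i τ₀ τ₁ h
    exact ⟨ih₀ (G.edge_mem ((hedge _).2 (Or.inl rfl))).2,
      ih₁ (G.edge_mem ((hedge _).2 (Or.inr rfl))).2⟩

section Ranking

variable {O : Type*} [LinearOrder O] [BoundedOrder O] {rk : ℕ → Q → O}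

/-- A ranking of the states at each position: a certificate that every state of rank below `⊤` is
accepted. The transition condition of a state can be met without raising the rank, and even with
the rank dropping if the state is non-recurring. -/
structure IsRanking (M : WAA Q A) (u : ℕ → A) (rk : ℕ → Q → O) : Prop where
  sat_le : ∀ i q, rk i q ≠ ⊤ → (M.δ q).Sat (u i) {p | rk (i + 1) p ≤ rk i q}
  bot_lt : ∀ i q, q ∉ M.recurring → ⊥ < rk i q
  sat_lt : ∀ i q, q ∉ M.recurring → rk i q ≠ ⊤ →
    (M.δ q).Sat (u i) {p | rk (i + 1) p < rk i q}

/-- The rank of a run graph vertex. -/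
noncomputable def vertRank (u : ℕ → A) (rk : ℕ → Q → O) : Vert Q A → O
  | (i, Sum.inl q) => rk i q
  | (i, Sum.inr τ) => τ.evalRank (rk (i + 1)) (u i)

/-- The vertices of rank below `⊤`, restricted to subformulas of the transition conditions. -/
def rankedVerts (M : WAA Q A) (u : ℕ → A) (rk : ℕ → Q → O) : Set (Vert Q A) :=
  {v | vertRank u rk v ≠ ⊤ ∧ ∀ τ, v.2 = Sum.inr τ → ∃ q, TCond.Subf τ (M.δ q)}

theorem Arc.subf {v w : Vert Q A} (h : M.Arc v w)
    (hv : ∀ τ, v.2 = Sum.inr τ → ∃ q, TCond.Subf τ (M.δ q)) :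
    ∀ τ, w.2 = Sum.inr τ → ∃ q, TCond.Subf τ (M.δ q) := by
  match v, h, hv with
  | (i, Sum.inl q), h, _ =>
    obtain rfl := h
    rintro _ ⟨⟩
    exact ⟨q, .refl _⟩
  | (i, Sum.inr (.next q)), h, _ =>
    obtain rfl := h
    rintro _ ⟨⟩
  | (i, Sum.inr (.or τ₀ τ₁)), h, hv =>
    obtain ⟨q, hq⟩ := hv _ rfl
    rcases h with rfl | rfl <;> rintro _ ⟨⟩
    · exact ⟨q, (TCond.Subf.orL (.refl _)).trans hq⟩
    · exact ⟨q, (TCond.Subf.orR (.refl _)).trans hq⟩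
  | (i, Sum.inr (.and τ₀ τ₁)), h, hv =>
    obtain ⟨q, hq⟩ := hv _ rfl
    rcases h with rfl | rfl <;> rintro _ ⟨⟩
    · exact ⟨q, (TCond.Subf.andL (.refl _)).trans hq⟩
    · exact ⟨q, (TCond.Subf.andR (.refl _)).trans hq⟩

/-- The run graph on the ranked vertices whose edges are the arcs that do not increase the rank. -/
noncomputable def IsRanking.runGraph (hrk : IsRanking M u rk) : M.RunGraph u where
  V := rankedVerts M u rk
  E v w := v ∈ rankedVerts M u rk ∧ M.Arc v w ∧ vertRank u rk w ≤ vertRank u rk v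
  edge_mem _ _ h := ⟨h.1, ne_top_of_le_ne_top h.1.1 h.2.2, h.2.1.subf h.1.2⟩
  cond_subf _ τ h := h.2 τ rfl
  state_succ i q hv _ := by
    refine ⟨fun h => h.2.1, ?_⟩
    rintro rfl
    exact ⟨hv, rfl, (hrk.sat_le i q hv.1).evalRank_le⟩
  next_succ i q hv _ := by
    refine ⟨fun h => h.2.1, ?_⟩
    rintro rfl
    exact ⟨hv, rfl, le_rfl⟩
  or_succ_subset _ _ _ _ _ h := h.2.1
  or_succ_exists i τ₀ τ₁ hv := by
    rcases min_choice (τ₀.evalRank (rk (i + 1)) (u i)) (τ₁.evalRank (rk (i + 1)) (u i)) with h | h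
    · exact ⟨(i, Sum.inr τ₀), hv, Or.inl rfl, h.ge⟩
    · exact ⟨(i, Sum.inr τ₁), hv, Or.inr rfl, h.ge⟩
  and_succ i τ₀ τ₁ hv w := by
    refine ⟨fun h => h.2.1, ?_⟩
    rintro (rfl | rfl)
    · exact ⟨hv, Or.inl rfl, le_max_left _ _⟩
    · exact ⟨hv, Or.inr rfl, le_max_right _ _⟩
  atom_succ _ _ _ h := h.2.1
  atom_ok i B hv := by
    by_contra hB
    exact hv.1 (if_neg hB)

theorem IsRanking.runGraph_final [WellFoundedLT O] (hrk : IsRanking M u rk) :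
    hrk.runGraph.Final := by
  intro p hp q hq
  by_contra hrec
  obtain ⟨N, hN⟩ := WellFoundedLT.antitone_chain_condition
    (antitone_nat_of_succ_le (f := fun n => vertRank u rk (p n)) fun n => (hp n).2.2)
  obtain ⟨n, hNn, hn⟩ := hq N
  have hpn : p n = ((p n).1, Sum.inl q) := Prod.ext rfl hn
  have rank_eq : vertRank u rk (p (n + 1)) = vertRank u rk (p n) :=
    (hN (n + 1) (by omega)).symm.trans (hN n hNn)
  obtain ⟨⟨hne, -⟩, harc, -⟩ := hp n
  rw [hpn] at rank_eq hne harc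
  rw [show p (n + 1) = _ from harc] at rank_eq
  exact ((hrk.sat_lt _ q hrec hne).evalRank_lt (hrk.bot_lt _ q hrec)).ne rank_eq

theorem IsRanking.acceptsFrom [WellFoundedLT O] (hrk : IsRanking M u rk) {i : ℕ} {q : Q}
    (h : rk i q ≠ ⊤) : M.AcceptsFrom u i q :=
  ⟨hrk.runGraph, hrk.runGraph_final, h, fun _ h => nomatch h⟩

end Ranking

/-! ### Strongly connected components -/

section Component

/-- Mutual reachability in the transition graph. -/
def sccSetoid (M : WAA Q A) : Setoid Q where
  r := M.Conn
  iseqv := ⟨fun _ => ⟨.refl, .refl⟩, And.symm, fun h h' => ⟨h.1.trans h'.1, h'.2.trans h.2⟩⟩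

/-- The strongly connected components of the transition graph, as an abstract index set. -/
abbrev SCC (M : WAA Q A) := Quotient M.sccSetoid

/-- The strongly connected component of a state. -/
def scc (M : WAA Q A) (q : Q) : M.SCC := Quotient.mk _ q

/-- The states belonging to a given strongly connected component. -/
abbrev Component (s : M.SCC) := {q // M.scc q = s}

theorem scc_eq_iff {p q : Q} : M.scc p = M.scc q ↔ M.Conn p q := Quotient.eq

theorem mem_recurring_iff_of_scc_eq {p q : Q} (h : M.scc p = M.scc q) :
    p ∈ M.recurring ↔ q ∈ M.recurring :=
  M.weak p q (scc_eq_iff.1 h).1 (scc_eq_iff.1 h).2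

/-- The number of states reachable from `q`. It is constant on components and drops along edges
between different components, which makes it a measure for inductions on components. -/
noncomputable def reachCard (M : WAA Q A) (q : Q) : ℕ :=
  {p | Relation.ReflTransGen M.Edge q p}.ncard

theorem reachCard_eq_of_scc_eq {p q : Q} (h : M.scc p = M.scc q) :
    M.reachCard p = M.reachCard q := by
  obtain ⟨hpq, hqp⟩ := scc_eq_iff.1 h
  exact congrArg Set.ncard (Set.ext fun _ => ⟨hqp.trans, hpq.trans⟩)

theorem Edge.reachCard_lt [Finite Q] {p q : Q} (hqp : M.Edge q p) (hne : M.scc p ≠ M.scc q) :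
    M.reachCard p < M.reachCard q :=
  Set.ncard_lt_ncard ⟨fun _ h => .head hqp h,
    fun h => hne (scc_eq_iff.2 ⟨h .refl, .single hqp⟩)⟩

theorem reachCard_pos [Finite Q] (q : Q) : 0 < M.reachCard q :=
  (Set.ncard_pos (Set.toFinite _)).2 ⟨q, .refl⟩

/-- The states assumed to be accepted at the next position: `L` prescribes them off the component
`s`, whereas inside `s` the set `X` collects the accepted states if `s` is non-recurring and the
rejected states if `s` is recurring. -/
def assign (s : M.SCC) (L : Set Q) (X : Set (Component s)) : Set Q :=
  {q | (∃ h : M.scc q = s, ⟨q, h⟩ ∈ X ↔ q ∉ M.recurring) ∨ M.scc q ≠ s ∧ q ∈ L}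

theorem coe_mem_assign_iff {s : M.SCC} {L : Set Q} {X : Set (Component s)} {x : Component s} :
    ↑x ∈ assign s L X ↔ (x ∈ X ↔ ↑x ∉ M.recurring) := by
  simp [assign, x.2]

theorem mem_assign_iff_of_ne {s : M.SCC} {L : Set Q} {X : Set (Component s)} {q : Q}
    (h : M.scc q ≠ s) : q ∈ assign s L X ↔ q ∈ L := by
  simp [assign, h]

theorem assign_subset_assign_of_mem_recurring {s : M.SCC} {L : Set Q} {X Y : Set (Component s)}
    {x : Component s} (hx : ↑x ∈ M.recurring) (hXY : X ⊆ Y) : assign s L Y ⊆ assign s L X := by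
  intro q hq
  by_cases hs : M.scc q = s
  · lift q to Component s using hs
    have hq_rec : ↑q ∈ M.recurring := (mem_recurring_iff_of_scc_eq (x.2.trans q.2.symm)).1 hx
    simp only [coe_mem_assign_iff, hq_rec, not_true, iff_false] at hq ⊢
    exact fun h => hq (hXY h)
  · rwa [mem_assign_iff_of_ne hs] at hq ⊢

theorem assign_subset_assign_of_notMem_recurring {s : M.SCC} {L : Set Q} {X Y : Set (Component s)}
    {x : Component s} (hx : ↑x ∉ M.recurring) (hXY : X ⊆ Y) : assign s L X ⊆ assign s L Y := by
  intro q hq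
  by_cases hs : M.scc q = s
  · lift q to Component s using hs
    have hq_rec : ↑q ∉ M.recurring := (mem_recurring_iff_of_scc_eq (x.2.trans q.2.symm)).not.1 hx
    simp only [coe_mem_assign_iff, hq_rec, not_false_iff, iff_true] at hq ⊢
    exact hXY hq
  · rwa [mem_assign_iff_of_ne hs] at hq ⊢

/-- One backward step on a component under the letter `a`: from the accepted (for recurring `s`,
rejected) states of `s` at the next position to those at the current one. -/
def componentStep (s : M.SCC) (a : A) (L : Set Q) : Set (Component s) →o Set (Component s) where
  toFun X := {x | (M.δ x).Sat a (assign s L X) ↔ ↑x ∉ M.recurring}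
  monotone' X Y hXY x hx := by
    by_cases hrec : ↑x ∈ M.recurring
    · simp only [Set.mem_ofPred_eq, hrec, not_true, iff_false] at hx ⊢
      exact fun h => hx (h.imp fun _ _ hq => assign_subset_assign_of_mem_recurring hrec hXY hq)
    · simp only [Set.mem_ofPred_eq, hrec, not_false_iff, iff_true] at hx ⊢
      exact hx.imp fun _ _ hq => assign_subset_assign_of_notMem_recurring hrec hXY hq

theorem componentStep_congr [Finite Q] {q : Q} {a : A} {L L' : Set Q}
    (h : ∀ p, M.reachCard p < M.reachCard q → (p ∈ L ↔ p ∈ L')) :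
    componentStep (M.scc q) a L = componentStep (M.scc q) a L' := by
  ext X x
  refine iff_congr (TCond.sat_congr fun p (hxp : M.Edge x p) => ?_) Iff.rfl
  by_cases hs : M.scc p = M.scc q
  · lift p to Component (M.scc q) using hs
    simp only [coe_mem_assign_iff]
  · rw [mem_assign_iff_of_ne hs, mem_assign_iff_of_ne hs]
    have hlt : M.reachCard p < M.reachCard x := hxp.reachCard_lt fun hpx => hs (hpx.trans x.2)
    exact h p (hlt.trans_eq (reachCard_eq_of_scc_eq x.2))

end Component

/-! ### Accepted states as least fixed points -/

section Accepted

open ChainCode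

/-- The states from which the suffix of `u` at position `i` is accepted. -/
def accepted (M : WAA Q A) (u : ℕ → A) (i : ℕ) : Set Q := {q | M.AcceptsFrom u i q}

theorem sat_accepted {i : ℕ} {q : Q} (h : q ∈ M.accepted u i) :
    (M.δ q).Sat (u i) (M.accepted u (i + 1)) := by
  obtain ⟨G, hG, hq⟩ := h
  have hδ := (G.edge_mem ((G.state_succ i q hq _).2 rfl)).2
  exact (G.sat_of_mem hδ).imp fun p _ hp => ⟨G, hG, hp⟩

/-- The backward steps on the component `s` along `u`, with the acceptance off `s` known. -/
def stepSeq (u : ℕ → A) (s : M.SCC) (i : ℕ) : Set (Component s) →o Set (Component s) :=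
  componentStep s (u i) (M.accepted u (i + 1))

/-- The states that the least fixed points of the components declare accepted. -/
def predicted (M : WAA Q A) (u : ℕ → A) (i : ℕ) : Set Q :=
  {q | ⟨q, rfl⟩ ∈ limit (stepSeq u (M.scc q)) i ↔ q ∉ M.recurring}

theorem coe_mem_predicted_iff {s : M.SCC} {x : Component s} {i : ℕ} :
    ↑x ∈ M.predicted u i ↔ (x ∈ limit (stepSeq u s) i ↔ ↑x ∉ M.recurring) := by
  obtain ⟨q, rfl⟩ := x
  rfl

theorem notMem_accepted_of_mem_stage {s : M.SCC} {x : Component s} (hx : ↑x ∈ M.recurring)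
    {n i : ℕ} (hn : x ∈ stage (stepSeq u s) n i) : ↑x ∉ M.accepted u i := by
  induction n generalizing i x with
  | zero => exact absurd hn (Set.notMem_empty x)
  | succ n ih =>
    intro hacc
    rw [stage_succ] at hn
    refine hn.not.2 (not_not.2 hx) ((sat_accepted hacc).imp fun p _ hp => ?_)
    by_cases hs : M.scc p = s
    · lift p to Component s using hs
      have hp_rec : ↑p ∈ M.recurring := (mem_recurring_iff_of_scc_eq (x.2.trans p.2.symm)).1 hx
      exact coe_mem_assign_iff.2 (iff_of_false (fun h => ih hp_rec h hp) (not_not.2 hp_rec))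
    · exact (mem_assign_iff_of_ne hs).2 hp

/-- The invariant of the induction along the edges of a final run graph; the condition vertices
between two states of `s` force it to be stated for all vertices. -/
def LimitInvariant (u : ℕ → A) (s : M.SCC) : Vert Q A → Prop
  | (i, Sum.inl q) => ∀ h : M.scc q = s, ⟨q, h⟩ ∈ limit (stepSeq u s) i
  | (i, Sum.inr τ) =>
    τ.Sat (u i) (assign s (M.accepted u (i + 1)) (limit (stepSeq u s) (i + 1)))

theorem RunGraph.Final.limitInvariant [Finite Q] {G : M.RunGraph u} (hG : G.Final) {s : M.SCC}
    (hs : ∀ x : Component s, ↑x ∉ M.recurring) {v : Vert Q A} (hv : v ∈ G.V) :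
    LimitInvariant u s v := by
  induction v using hG.wellFounded.induction with
  | _ v ih =>
  have ih_cond : ∀ i τ, G.E v (i, Sum.inr τ) → LimitInvariant u s (i, Sum.inr τ) :=
    fun i τ h => ih _ ⟨h, nofun⟩ (G.edge_mem h).2
  match v, hv with
  | (i, Sum.inl q), hv =>
    intro hq
    rw [← apply_limit_succ]
    exact iff_of_true (ih_cond i _ ((G.state_succ i q hv _).2 rfl)) (hs ⟨q, hq⟩)
  | (i, Sum.inr (.atom B)), hv => exact G.atom_ok i B hv
  | (i, Sum.inr (.next p)), hv =>
    have hedge := (G.next_succ i p hv _).2 rfl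
    by_cases hp : M.scc p = s
    · lift p to Component s using hp
      have hlim : p ∈ limit (stepSeq u s) (i + 1) :=
        ih _ ⟨hedge, by rintro _ ⟨⟩; exact hs p⟩ (G.edge_mem hedge).2 p.2
      exact coe_mem_assign_iff.2 (iff_of_true hlim (hs p))
    · exact (mem_assign_iff_of_ne hp).2 ⟨G, hG, (G.edge_mem hedge).2⟩
  | (i, Sum.inr (.or τ₀ τ₁)), hv =>
    obtain ⟨w, hw⟩ := G.or_succ_exists i τ₀ τ₁ hv
    rcases G.or_succ_subset i τ₀ τ₁ hv w hw with rfl | rfl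
    · exact Or.inl (ih_cond i τ₀ hw)
    · exact Or.inr (ih_cond i τ₁ hw)
  | (i, Sum.inr (.and τ₀ τ₁)), hv =>
    exact ⟨ih_cond i τ₀ ((G.and_succ i τ₀ τ₁ hv _).2 (Or.inl rfl)),
      ih_cond i τ₁ ((G.and_succ i τ₀ τ₁ hv _).2 (Or.inr rfl))⟩

theorem accepted_subset_predicted [Finite Q] (u : ℕ → A) (i : ℕ) :
    M.accepted u i ⊆ M.predicted u i := by
  intro q hq
  by_cases hrec : q ∈ M.recurring
  · refine iff_of_false (fun hlim => ?_) (not_not.2 hrec)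
    obtain ⟨n, hn⟩ := Set.mem_iUnion.1 hlim
    exact notMem_accepted_of_mem_stage hrec hn hq
  · obtain ⟨G, hG, hqG⟩ := hq
    have hs : ∀ x : Component (M.scc q), ↑x ∉ M.recurring := fun x =>
      (mem_recurring_iff_of_scc_eq x.2).not.2 hrec
    exact iff_of_true (hG.limitInvariant hs hqG rfl) hrec

/-- The first stage containing `q`. For a state outside the limit it is `sInf ∅ = 0`, so it is
constant on the predicted states of a recurring component. -/
noncomputable def entry (M : WAA Q A) (u : ℕ → A) (i : ℕ) (q : Q) : ℕ :=
  sInf {n | ⟨q, rfl⟩ ∈ stage (stepSeq u (M.scc q)) n i}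

theorem entry_coe {s : M.SCC} (x : Component s) (i : ℕ) :
    M.entry u i x = sInf {n | x ∈ stage (stepSeq u s) n i} := by
  obtain ⟨q, rfl⟩ := x
  rfl

theorem entry_eq_zero_of_notMem_limit {s : M.SCC} {x : Component s} {i : ℕ}
    (hx : x ∉ limit (stepSeq u s) i) : M.entry u i x = 0 := by
  rw [entry_coe, Nat.sInf_eq_zero]
  exact Or.inr (Set.eq_empty_of_forall_notMem fun n hn => hx (Set.mem_iUnion.2 ⟨n, hn⟩))

open Classical in
/-- The ranking certifying that predicted states are accepted. -/
noncomputable def predictedRank (M : WAA Q A) (u : ℕ → A) (i : ℕ) (q : Q) : WithTop (ℕ ×ₗ ℕ) :=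
  if q ∈ M.predicted u i then ↑(toLex (M.reachCard q, M.entry u i q)) else ⊤

theorem predictedRank_of_mem {i : ℕ} {q : Q} (h : q ∈ M.predicted u i) :
    M.predictedRank u i q = ↑(toLex (M.reachCard q, M.entry u i q)) :=
  if_pos h

theorem predictedRank_ne_top_iff {i : ℕ} {q : Q} :
    M.predictedRank u i q ≠ ⊤ ↔ q ∈ M.predicted u i := by
  simp [predictedRank]

theorem bot_lt_predictedRank [Finite Q] (i : ℕ) (q : Q) : ⊥ < M.predictedRank u i q := by
  by_cases h : q ∈ M.predicted u i
  · rw [predictedRank_of_mem h, ← WithTop.coe_bot, WithTop.coe_lt_coe]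
    exact Prod.Lex.toLex_lt_toLex.2 (Or.inl (reachCard_pos q))
  · exact bot_lt_iff_ne_bot.2 (by simp [predictedRank, h])

theorem predictedRank_lt_of_scc_ne [Finite Q] {i : ℕ} {p q : Q} (hq : q ∈ M.predicted u i)
    (hqp : M.Edge q p) (hne : M.scc p ≠ M.scc q) (hp : p ∈ M.accepted u (i + 1)) :
    M.predictedRank u (i + 1) p < M.predictedRank u i q := by
  rw [predictedRank_of_mem hq, predictedRank_of_mem (accepted_subset_predicted u _ hp),
    WithTop.coe_lt_coe]
  exact Prod.Lex.toLex_lt_toLex.2 (Or.inl (hqp.reachCard_lt hne))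

theorem sat_predictedRank_le [Finite Q] {i : ℕ} {q : Q} (hrec : q ∈ M.recurring)
    (hq : q ∈ M.predicted u i) :
    (M.δ q).Sat (u i) {p | M.predictedRank u (i + 1) p ≤ M.predictedRank u i q} := by
  have notMem_limit : ⟨q, rfl⟩ ∉ limit (stepSeq u (M.scc q)) i := hq.not.2 (not_not.2 hrec)
  have sat : (M.δ q).Sat (u i)
      (assign (M.scc q) (M.accepted u (i + 1)) (limit (stepSeq u _) (i + 1))) := by
    rw [← apply_limit_succ] at notMem_limit
    by_contra hsat
    exact notMem_limit (iff_of_false hsat (not_not.2 hrec))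
  refine sat.imp fun p hqp hp => ?_
  by_cases hs : M.scc p = M.scc q
  · lift p to Component (M.scc q) using hs
    have hp_pred : ↑p ∈ M.predicted u (i + 1) := coe_mem_predicted_iff.2 (coe_mem_assign_iff.1 hp)
    have hp_notMem : p ∉ limit (stepSeq u (M.scc q)) (i + 1) :=
      (coe_mem_assign_iff.1 hp).not.2 (not_not.2 ((mem_recurring_iff_of_scc_eq p.2).2 hrec))
    have rank_eq : M.predictedRank u (i + 1) p = M.predictedRank u i q := by
      rw [predictedRank_of_mem hp_pred, predictedRank_of_mem hq, reachCard_eq_of_scc_eq p.2,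
        entry_eq_zero_of_notMem_limit hp_notMem, entry_eq_zero_of_notMem_limit notMem_limit]
    exact rank_eq.le
  · exact (predictedRank_lt_of_scc_ne hq hqp hs ((mem_assign_iff_of_ne hs).1 hp)).le

theorem sat_predictedRank_lt [Finite Q] {i : ℕ} {q : Q} (hrec : q ∉ M.recurring)
    (hq : q ∈ M.predicted u i) :
    (M.δ q).Sat (u i) {p | M.predictedRank u (i + 1) p < M.predictedRank u i q} := by
  have mem_stage_entry : ⟨q, rfl⟩ ∈ stage (stepSeq u (M.scc q)) (M.entry u i q) i :=
    Nat.sInf_mem (Set.mem_iUnion.1 (hq.2 hrec))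
  obtain ⟨n, hn⟩ : ∃ n, M.entry u i q = n + 1 := Nat.exists_eq_succ_of_ne_zero fun h0 =>
    absurd (h0 ▸ mem_stage_entry) (Set.notMem_empty _)
  rw [hn, stage_succ] at mem_stage_entry
  refine (mem_stage_entry.2 hrec).imp fun p hqp hp => ?_
  by_cases hs : M.scc p = M.scc q
  · lift p to Component (M.scc q) using hs
    have hp_rec : ↑p ∉ M.recurring := (mem_recurring_iff_of_scc_eq p.2).not.2 hrec
    have hp_stage : p ∈ stage (stepSeq u (M.scc q)) n (i + 1) := (coe_mem_assign_iff.1 hp).2 hp_rec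
    have hp_pred : ↑p ∈ M.predicted u (i + 1) :=
      coe_mem_predicted_iff.2 (iff_of_true (Set.mem_iUnion.2 ⟨n, hp_stage⟩) hp_rec)
    have hp_entry : M.entry u (i + 1) p ≤ n := entry_coe (u := u) p _ ▸ Nat.sInf_le hp_stage
    simp only [Set.mem_ofPred_eq, predictedRank_of_mem hp_pred, predictedRank_of_mem hq,
      WithTop.coe_lt_coe]
    exact Prod.Lex.toLex_lt_toLex.2 (Or.inr ⟨reachCard_eq_of_scc_eq p.2, by omega⟩)
  · exact predictedRank_lt_of_scc_ne hq hqp hs ((mem_assign_iff_of_ne hs).1 hp)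

theorem isRanking_predictedRank [Finite Q] (M : WAA Q A) (u : ℕ → A) :
    IsRanking M u (M.predictedRank u) where
  sat_le i q hq := by
    rw [predictedRank_ne_top_iff] at hq
    by_cases hrec : q ∈ M.recurring
    · exact sat_predictedRank_le hrec hq
    · exact (sat_predictedRank_lt hrec hq).imp fun p _ (h : M.predictedRank u (i + 1) p < _) => h.le
  bot_lt i q _ := bot_lt_predictedRank i q
  sat_lt i q hrec hq := sat_predictedRank_lt hrec (predictedRank_ne_top_iff.1 hq)

theorem accepted_eq_predicted [Finite Q] (M : WAA Q A) (u : ℕ → A) (i : ℕ) :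
    M.accepted u i = M.predicted u i :=
  (accepted_subset_predicted u i).antisymm fun _ hq =>
    (isRanking_predictedRank M u).acceptsFrom (predictedRank_ne_top_iff.2 hq)

end Accepted

/-! ### The backward deterministic automaton -/

section BackwardDeterministic

open ChainCode

/-- A state of the backward deterministic automaton: for each component, the code of a chain of
subsets of that component. -/
abbrev State (M : WAA Q A) := ∀ s : M.SCC, Component s → Fin (Nat.card (Component s) + 1)

/-- The code that a state carries for the component `s`, as a function to `ℕ`. -/
def State.code (g : M.State) (s : M.SCC) (x : Component s) : ℕ := g s x

theorem State.ext_code {g g' : M.State} (h : ∀ s, g.code s = g'.code s) : g = g' :=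
  funext fun s => funext fun x => Fin.ext (congrFun (h s) x)

/-- The states of `M` declared accepted by the largest members of the coded chains. -/
def output (g : M.State) : Set Q := {q | 0 < g.code (M.scc q) ⟨q, rfl⟩ ↔ q ∉ M.recurring}

/-- The transitions whose backward step on the component `s` identifies the two largest members of
the coded chain. -/
def collapsing (s : M.SCC) : Set (M.State × A × M.State) :=
  {t | Collapses (componentStep s t.2.1 (output t.2.2)) (t.2.2.code s)}

theorem mem_output_iff [Finite Q] {i : ℕ} {q : Q} {g : M.State}
    (hg : g.code (M.scc q) = limitCode (stepSeq u (M.scc q)) i) :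
    q ∈ output g ↔ q ∈ M.accepted u i := by
  rw [accepted_eq_predicted]
  change (0 < g.code _ _ ↔ _) ↔ _
  rw [hg, limitCode_pos_iff]
  rfl

variable [Finite Q]

/-- The transition function of the backward deterministic automaton: apply the backward step of
each component to all members of the coded chain. -/
noncomputable def transition (a : A) (g : M.State) : M.State := fun s x =>
  ⟨step (componentStep s a (output g)) (g.code s) x, Nat.lt_succ_of_le (step_le_card _ _ x)⟩

/-- The run of the backward deterministic automaton that codes the true stages. -/
noncomputable def run (M : WAA Q A) (u : ℕ → A) (i : ℕ) : M.State := fun s x =>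
  ⟨limitCode (stepSeq u s) i x, Nat.lt_succ_of_le (code_le_card (isChain_range_stage i) x)⟩

theorem isBackRun_transition_iff {r : ℕ → M.State} :
    IsBackRun transition u r ↔ ∀ i s, (r i).code s =
      step (componentStep s (u i) (output (r (i + 1)))) ((r (i + 1)).code s) :=
  forall_congr' fun i => ⟨fun h s => congrArg (·.code s) h,
    fun h => State.ext_code (g' := transition (u i) (r (i + 1))) h⟩

theorem output_run (M : WAA Q A) (u : ℕ → A) (i : ℕ) : output (M.run u i) = M.accepted u i :=
  Set.ext fun _ => mem_output_iff rfl

theorem componentStep_output_run (u : ℕ → A) (s : M.SCC) (i : ℕ) :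
    componentStep s (u i) (output (M.run u (i + 1))) = stepSeq u s i := by
  rw [output_run, stepSeq]

theorem isBackRun_run (M : WAA Q A) (u : ℕ → A) : IsBackRun transition u (M.run u) := by
  refine isBackRun_transition_iff.2 fun i s => ?_
  rw [componentStep_output_run]
  exact limitCode_eq_step (stepSeq u s) i

theorem frequently_run_mem_collapsing (u : ℕ → A) (s : M.SCC) :
    ∃ᶠ i in atTop, (M.run u i, u i, M.run u (i + 1)) ∈ collapsing s := by
  refine (frequently_collapses_limitCode (stepSeq u s)).mono fun i hi => ?_
  rwa [← componentStep_output_run] at hi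

theorem eq_run {r : ℕ → M.State} (hr : IsBackRun transition u r)
    (hc : ∀ s, ∃ᶠ i in atTop, (r i, u i, r (i + 1)) ∈ collapsing s) : r = M.run u := by
  rw [isBackRun_transition_iff] at hr
  suffices code_eq : ∀ q i, (r i).code (M.scc q) = limitCode (stepSeq u (M.scc q)) i from
    funext fun i => State.ext_code fun s => s.inductionOn fun q => code_eq q i
  intro q
  induction hq : M.reachCard q using Nat.strong_induction_on generalizing q with
  | h n ih =>
    have step_eq : ∀ i, componentStep (M.scc q) (u i) (output (r (i + 1))) =
        stepSeq u (M.scc q) i := fun i =>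
      componentStep_congr fun p hp => mem_output_iff (ih _ (hq ▸ hp) p rfl (i + 1))
    refine congrFun (eq_limitCode (fun i => ?_) ((hc (M.scc q)).mono fun i hi => ?_))
    · rw [hr i, step_eq]
    · rwa [← step_eq]

theorem isBackRun_and_frequently_iff {r : ℕ → M.State} :
    (IsBackRun transition u r ∧ ∀ s, ∃ᶠ i in atTop, (r i, u i, r (i + 1)) ∈ collapsing s) ↔
      r = M.run u := by
  refine ⟨fun h => eq_run h.1 h.2, ?_⟩
  rintro rfl
  exact ⟨isBackRun_run M u, frequently_run_mem_collapsing u⟩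

end BackwardDeterministic

section Card

theorem card_component_eq {l : ℕ} {S : Fin l → Finset Q} (hS : IsSCCEnum M S) {j : Fin l} {q : Q}
    (hq : q ∈ S j) : Nat.card (Component (M.scc q)) = (S j).card := by
  rw [← Nat.card_eq_finsetCard]
  refine Nat.card_congr (Equiv.subtypeEquivRight fun p => ?_)
  rw [hS.2 j q p hq, eq_comm, scc_eq_iff]

variable [Finite Q]

theorem card_scc_le (M : WAA Q A) : Nat.card M.SCC ≤ Nat.card Q :=
  Nat.card_le_card_of_surjective M.scc Quotient.mk_surjective

theorem card_state (M : WAA Q A) [Fintype M.SCC] : Nat.card M.State =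
    ∏ s : M.SCC, (Nat.card (Component s) + 1) ^ Nat.card (Component s) := by
  simp only [Nat.card_pi, Nat.card_fun, Nat.card_fin]

theorem card_state_le (M : WAA Q A) : Nat.card M.State ≤ (Nat.card Q + 1) ^ Nat.card Q := by
  have := Fintype.ofFinite M.SCC
  have sum_card : ∑ s : M.SCC, Nat.card (Component s) = Nat.card Q := by
    rw [← Nat.card_sigma, Nat.card_congr (Equiv.sigmaFiberEquiv M.scc)]
  calc Nat.card M.State
      ≤ ∏ s : M.SCC, (Nat.card Q + 1) ^ Nat.card (Component s) := by
        rw [card_state]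
        gcongr
        exact Finite.card_subtype_le _
    _ = (Nat.card Q + 1) ^ Nat.card Q := by rw [Finset.prod_pow_eq_pow_sum, sum_card]

theorem card_state_eq_prod {l : ℕ} {S : Fin l → Finset Q} (hS : IsSCCEnum M S) :
    Nat.card M.State = ∏ j : Fin l, ((S j).card + 1) ^ (S j).card := by
  have := Fintype.ofFinite M.SCC
  choose idx mem_idx idx_unique using fun s : M.SCC => hS.1 s.out
  have scc_out : ∀ s : M.SCC, M.scc s.out = s := Quotient.out_eq
  rw [card_state]
  refine Fintype.prod_of_injective idx (fun s t hst => ?_) _ _ (fun j hj => ?_) fun s => ?_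
  · have hconn := (hS.2 _ _ t.out (mem_idx s)).1 (hst ▸ mem_idx t)
    rw [← scc_out s, ← scc_out t, scc_eq_iff.2 hconn]
  · suffices S j = ∅ by simp [this]
    refine Finset.eq_empty_of_forall_notMem fun q hq => hj ⟨M.scc q, ?_⟩
    have hconn : M.Conn q (M.scc q).out := scc_eq_iff.1 (scc_out _).symm
    exact (idx_unique _ j ((hS.2 j q _ hq).2 hconn)).symm
  · rw [← card_component_eq hS (mem_idx s), scc_out]

end Card

end WAA

section Transport

variable {P P' A : Type*} {u : ℕ → A}

theorem isBackRun_conj_iff {ρ : A → P → P} (e : P ≃ P') {r : ℕ → P'} :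
    IsBackRun (fun a p => e (ρ a (e.symm p))) u r ↔ IsBackRun ρ u (e.symm ∘ r) :=
  forall_congr' fun _ => e.symm_apply_eq.symm

theorem gtbFinal_iff {k : ℕ} {T : Fin k → Set (P × A × P)} {r : ℕ → P} :
    GTBFinal T u r ↔ ∀ j, ∃ᶠ i in Filter.atTop, (r i, u i, r (i + 1)) ∈ T j := by
  simp only [GTBFinal, Filter.frequently_atTop]

end Transport

/-- Main Theorem: every weak alternating automaton `M` can be turned
into a backward deterministic automaton `ℬ` (state set `P`, transition function `ρ`,
generalized transition Büchi condition `T` with at most `|Q|` transition sets) with an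
output function `lam` such that `f_M = f_{ℬ,lam}`; moreover, for every enumeration
`S₀, …, S_{l-1}` of the SCC's of the transition graph of `M`, the number of states of `ℬ`
is at most `∏_{j<l} (|S j| + 1) ^ |S j|`, in particular at most `(n+1)^n` for `n = |Q|`. -/
theorem weak_alternating_to_backward_deterministic {Q A : Type*} [Fintype Q]
    (M : WAA Q A) :
    ∃ (P : Type) (_ : Fintype P) (ρ : A → P → P) (k : ℕ)
      (T : Fin k → Set (P × A × P)) (lam : P → Set Q),
      k ≤ Fintype.card Q ∧
      (∀ u : ℕ → A, ∃! r : ℕ → P, IsBackRun ρ u r ∧ GTBFinal T u r) ∧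
      (∀ (u : ℕ → A) (r : ℕ → P), IsBackRun ρ u r → GTBFinal T u r →
        ∀ i, lam (r i) = {q : Q | WAA.AcceptsFrom M u i q}) ∧
      (∀ (l : ℕ) (S : Fin l → Finset Q), IsSCCEnum M S →
        Fintype.card P ≤ ∏ j : Fin l, ((S j).card + 1) ^ (S j).card) ∧
      Fintype.card P ≤ (Fintype.card Q + 1) ^ Fintype.card Q := by
  have e := Finite.equivFin M.State
  have f := Finite.equivFin M.SCC
  let ρ (a : A) (p : Fin (Nat.card M.State)) := e (WAA.transition a (e.symm p))
  let T (j : Fin (Nat.card M.SCC)) : Set (Fin (Nat.card M.State) × A × Fin (Nat.card M.State)) :=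
    {t | (e.symm t.1, t.2.1, e.symm t.2.2) ∈ WAA.collapsing (f.symm j)}
  have final_iff (u : ℕ → A) (r : ℕ → Fin (Nat.card M.State)) :
      IsBackRun ρ u r ∧ GTBFinal T u r ↔ r = e ∘ M.run u := by
    rw [isBackRun_conj_iff, gtbFinal_iff, ← e.symm_comp_eq, ← WAA.isBackRun_and_frequently_iff,
      ← f.symm.forall_congr_right]
    rfl
  refine ⟨Fin (Nat.card M.State), inferInstance, ρ, Nat.card M.SCC, T,
    WAA.output ∘ e.symm, ?_, fun u => ?_, fun u r hr hT i => ?_, fun l S hS => ?_, ?_⟩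
  · exact Nat.card_eq_fintype_card (α := Q) ▸ M.card_scc_le
  · exact ⟨e ∘ M.run u, (final_iff u _).2 rfl, fun r => (final_iff u r).1⟩
  · rw [(final_iff u r).1 ⟨hr, hT⟩]
    exact (congrArg WAA.output (e.symm_apply_apply _)).trans (M.output_run u i)
  · exact (Fintype.card_fin _).trans_le (WAA.card_state_eq_prod hS).le
  · exact Nat.card_eq_fintype_card (α := Q) ▸ (Fintype.card_fin _).trans_le M.card_state_le
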